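/- arXiv:2011.10936 — 2 statements merged into one kernel-verified Lean document; each statement's English description precedes it below -/
import Mathlib

section
/- The complex Fresnel integral converges at infinity to (1+i)/2; that is, the function x ↦ ∫₀ˣ exp(iπt²/2) dt tends to (1+i)/2 as the real variable x tends to +∞. -/
open Real Complex Filter intervalIntegral

/-!
Integrating `exp (-b t²) = t⁻¹ · (t exp (-b t²))` by parts, with primitive `exp (-b t²) / (-2b)` for
the second factor, bounds `∫ t in x..y, exp (-b t²)` by `1 / (‖b‖ x)` for `0 < x ≤ y` whenever
`0 ≤ re b` and `b ≠ 0`. For `0 < re b` the limit `y → ∞` shows that `∫ t in 0..x, exp (-b t²)` is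
within `1 / (‖b‖ x)` of the Gaussian integral `√(π / b) / 2`. At fixed `x` both sides of this
inequality are continuous in `b`, so it persists on the imaginary axis away from `0`. The Fresnel
integral is the case `b = -iπ/2`, where `π / b = 2i = (1 + i)²`.
-/

theorem intervalIntegrable_deriv_of_nonpos {u u' : ℝ → ℝ} {a b : ℝ}
    (hcont : ContinuousOn u (Set.uIcc a b))
    (hderiv : ∀ t ∈ Set.Ioo (min a b) (max a b), HasDerivAt u (u' t) t)
    (hneg : ∀ t ∈ Set.Ioo (min a b) (max a b), u' t ≤ 0) :
    IntervalIntegrable u' MeasureTheory.volume a b := by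
  have h_neg_deriv : IntervalIntegrable (-u') MeasureTheory.volume a b :=
    intervalIntegrable_deriv_of_nonneg hcont.neg (fun t ht => (hderiv t ht).neg)
      (fun t ht => neg_nonneg.mpr (hneg t ht))
  simpa only [neg_neg] using h_neg_deriv.neg

section DerivNonpos

variable {E : Type*} [NormedAddCommGroup E] [NormedSpace ℝ E] {u u' : ℝ → ℝ} {v v' : ℝ → E}
  {a b C : ℝ}

theorem norm_integral_deriv_smul_le_of_deriv_nonpos (hab : a ≤ b)
    (hu : ∀ t ∈ Set.Icc a b, HasDerivAt u (u' t) t) (hu' : ∀ t ∈ Set.Icc a b, u' t ≤ 0)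
    (hvC : ∀ t ∈ Set.Icc a b, ‖v t‖ ≤ C) :
    ‖∫ t in a..b, u' t • v t‖ ≤ (u a - u b) * C := by
  rw [← Set.uIcc_of_le hab] at hu hu' hvC
  have hu'_int : IntervalIntegrable u' MeasureTheory.volume a b :=
    intervalIntegrable_deriv_of_nonpos (HasDerivAt.continuousOn hu)
      (fun t ht => hu t (Set.Ioo_subset_Icc_self ht))
      (fun t ht => hu' t (Set.Ioo_subset_Icc_self ht))
  calc ‖∫ t in a..b, u' t • v t‖ ≤ ∫ t in a..b, -u' t * C := by
        refine norm_integral_le_of_norm_le hab (.of_forall fun t ht => ?_)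
          (hu'_int.neg.mul_const C)
        have ht : t ∈ Set.uIcc a b := Set.Icc_subset_uIcc (Set.Ioc_subset_Icc_self ht)
        rw [norm_smul, Real.norm_of_nonpos (hu' t ht)]
        exact mul_le_mul_of_nonneg_left (hvC t ht) (neg_nonneg.mpr (hu' t ht))
    _ = (u a - u b) * C := by
        rw [integral_mul_const, intervalIntegral.integral_neg,
          integral_eq_sub_of_hasDerivAt hu hu'_int, neg_sub]

theorem norm_integral_smul_deriv_le_of_deriv_nonpos [CompleteSpace E] (hab : a ≤ b)
    (hu : ∀ t ∈ Set.Icc a b, HasDerivAt u (u' t) t) (hu' : ∀ t ∈ Set.Icc a b, u' t ≤ 0)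
    (hub : 0 ≤ u b) (hv : ∀ t ∈ Set.Icc a b, HasDerivAt v (v' t) t)
    (hv' : IntervalIntegrable v' MeasureTheory.volume a b)
    (hvC : ∀ t ∈ Set.Icc a b, ‖v t‖ ≤ C) :
    ‖∫ t in a..b, u t • v' t‖ ≤ 2 * C * u a := by
  have h_anti : AntitoneOn u (Set.Icc a b) :=
    antitoneOn_of_hasDerivWithinAt_nonpos (convex_Icc a b) (HasDerivAt.continuousOn hu)
      (fun t ht => (hu t (interior_subset ht)).hasDerivWithinAt)
      (fun t ht => hu' t (interior_subset ht))
  have ha : a ∈ Set.Icc a b := Set.left_mem_Icc.mpr hab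
  have hb : b ∈ Set.Icc a b := Set.right_mem_Icc.mpr hab
  have hua : 0 ≤ u a := hub.trans (h_anti ha hb hab)
  have h_deriv_smul := norm_integral_deriv_smul_le_of_deriv_nonpos hab hu hu' hvC
  rw [← Set.uIcc_of_le hab] at hu hu' hv
  have hu'_int : IntervalIntegrable u' MeasureTheory.volume a b :=
    intervalIntegrable_deriv_of_nonpos (HasDerivAt.continuousOn hu)
      (fun t ht => hu t (Set.Ioo_subset_Icc_self ht))
      (fun t ht => hu' t (Set.Ioo_subset_Icc_self ht))
  calc ‖∫ t in a..b, u t • v' t‖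
      = ‖u b • v b - u a • v a - ∫ t in a..b, u' t • v t‖ := by
        rw [integral_smul_deriv_eq_deriv_smul hu hv hu'_int hv']
    _ ≤ ‖u b • v b‖ + ‖u a • v a‖ + ‖∫ t in a..b, u' t • v t‖ :=
        (norm_sub_le _ _).trans (by gcongr; exact norm_sub_le _ _)
    _ ≤ u b * C + u a * C + (u a - u b) * C := by
        rw [norm_smul, norm_smul, Real.norm_of_nonneg hub, Real.norm_of_nonneg hua]
        gcongr
        exacts [hvC b hb, hvC a ha]
    _ = 2 * C * u a := by ring

end DerivNonpos

theorem norm_cexp_neg_mul_sq_le_one {b : ℂ} (hb : 0 ≤ b.re) (t : ℝ) :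
    ‖Complex.exp (-b * (t : ℂ) ^ 2)‖ ≤ 1 := by
  rw [norm_cexp_neg_mul_sq, Real.exp_le_one_iff, neg_mul, neg_nonpos]
  positivity

theorem hasDerivAt_cexp_neg_mul_sq_div {b : ℂ} (hb : b ≠ 0) (t : ℝ) :
    HasDerivAt (fun s : ℝ => Complex.exp (-b * (s : ℂ) ^ 2) / (-2 * b))
      (t * Complex.exp (-b * (t : ℂ) ^ 2)) t := by
  have h_exponent : HasDerivAt (fun z : ℂ => -b * z ^ 2) (-b * (2 * t)) (t : ℂ) := by
    simpa using (hasDerivAt_pow 2 (t : ℂ)).const_mul (-b)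
  convert! (h_exponent.cexp.div_const (-2 * b)).comp_ofReal using 1
  field_simp

theorem norm_integral_cexp_neg_mul_sq_le {b : ℂ} (hb : 0 ≤ b.re) (hb0 : b ≠ 0) {x y : ℝ}
    (hx : 0 < x) (hxy : x ≤ y) :
    ‖∫ t in x..y, Complex.exp (-b * (t : ℂ) ^ 2)‖ ≤ 1 / (‖b‖ * x) := by
  have hpos : ∀ t ∈ Set.Icc x y, 0 < t := fun t ht => hx.trans_le ht.1
  have h_factor : ∫ t in x..y, Complex.exp (-b * (t : ℂ) ^ 2) =
      ∫ t in x..y, t⁻¹ • (t * Complex.exp (-b * (t : ℂ) ^ 2)) := by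
    refine integral_congr fun t ht => ?_
    rw [Set.uIcc_of_le hxy] at ht
    have ht0 : (t : ℂ) ≠ 0 := ofReal_ne_zero.mpr (hpos t ht).ne'
    simp only [real_smul, ofReal_inv, inv_mul_cancel_left₀ ht0]
  have h_primitive_le : ∀ t : ℝ, ‖Complex.exp (-b * (t : ℂ) ^ 2) / (-2 * b)‖ ≤ 1 / (2 * ‖b‖) := by
    intro t
    rw [norm_div, norm_mul, norm_neg, Complex.norm_ofNat]
    gcongr
    exact norm_cexp_neg_mul_sq_le_one hb t
  calc ‖∫ t in x..y, Complex.exp (-b * (t : ℂ) ^ 2)‖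
      ≤ 2 * (1 / (2 * ‖b‖)) * x⁻¹ := by
        rw [h_factor]
        exact norm_integral_smul_deriv_le_of_deriv_nonpos hxy
          (fun t ht => hasDerivAt_inv (hpos t ht).ne')
          (fun t _ => neg_nonpos.mpr (by positivity))
          (inv_nonneg.mpr (hx.le.trans hxy))
          (fun t _ => hasDerivAt_cexp_neg_mul_sq_div hb0 t)
          (Continuous.intervalIntegrable (by fun_prop) x y)
          (fun t _ => h_primitive_le t)
    _ = 1 / (‖b‖ * x) := by field_simp

theorem norm_integral_cexp_neg_mul_sq_sub_le_of_re_pos {b : ℂ} (hb : 0 < b.re) {x : ℝ}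
    (hx : 0 < x) :
    ‖(∫ t in (0 : ℝ)..x, Complex.exp (-b * (t : ℂ) ^ 2)) - (π / b) ^ (1 / 2 : ℂ) / 2‖ ≤
      1 / (‖b‖ * x) := by
  have hb0 : b ≠ 0 := ne_zero_of_re_pos hb
  have h_int := integrable_cexp_neg_mul_sq hb
  have h_lim := MeasureTheory.intervalIntegral_tendsto_integral_Ioi 0 h_int.integrableOn tendsto_id
  rw [integral_gaussian_complex_Ioi hb] at h_lim
  rw [norm_sub_rev]
  refine le_of_tendsto (h_lim.sub_const _).norm ?_
  filter_upwards [eventually_ge_atTop x] with y hxy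
  rw [id, integral_interval_sub_left h_int.intervalIntegrable h_int.intervalIntegrable]
  exact norm_integral_cexp_neg_mul_sq_le hb.le hb0 hx hxy

theorem mem_slitPlane_of_re_nonneg {z : ℂ} (hz : 0 ≤ z.re) (hz0 : z ≠ 0) : z ∈ slitPlane := by
  rw [mem_slitPlane_iff_not_le_zero, Complex.le_def]
  rintro ⟨hre, him⟩
  exact hz0 (Complex.ext (le_antisymm hre hz) him)

theorem continuousAt_ofReal_div_cpow_const {r : ℝ} (hr : 0 < r) {b : ℂ} (hb : 0 ≤ b.re)
    (hb0 : b ≠ 0) (s : ℂ) : ContinuousAt (fun z : ℂ => (r / z) ^ s) b := by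
  have h_re : 0 ≤ ((r : ℂ) / b).re := by
    rw [div_re, ofReal_re, ofReal_im, zero_mul, zero_div, add_zero]
    have := normSq_nonneg b
    positivity
  have h_ne : (r : ℂ) / b ≠ 0 := div_ne_zero (ofReal_ne_zero.mpr hr.ne') hb0
  exact (continuousAt_const.div continuousAt_id hb0).cpow continuousAt_const
    (mem_slitPlane_of_re_nonneg h_re h_ne)

theorem norm_integral_cexp_neg_mul_sq_sub_le {b : ℂ} (hb : 0 ≤ b.re) (hb0 : b ≠ 0) {x : ℝ}
    (hx : 0 < x) :
    ‖(∫ t in (0 : ℝ)..x, Complex.exp (-b * (t : ℂ) ^ 2)) - (π / b) ^ (1 / 2 : ℂ) / 2‖ ≤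
      1 / (‖b‖ * x) := by
  have h_closure : b ∈ closure {z : ℂ | 0 < z.re} := by
    rwa [closure_setOfPred_lt_re]
  have h_integral : Continuous fun z : ℂ =>
      ∫ t in (0 : ℝ)..x, Complex.exp (-z * (t : ℂ) ^ 2) :=
    continuous_parametric_intervalIntegral_of_continuous' (by fun_prop) 0 x
  have h_gaussian : ContinuousAt (fun z : ℂ => (π / z) ^ (1 / 2 : ℂ)) b :=
    continuousAt_ofReal_div_cpow_const pi_pos hb hb0 _
  have h_bound : ContinuousAt (fun z : ℂ => 1 / (‖z‖ * x)) b :=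
    continuousAt_const.div (by fun_prop) (by positivity)
  exact ContinuousWithinAt.closure_le h_closure
    (h_integral.continuousAt.sub (h_gaussian.div_const 2)).norm.continuousWithinAt
    h_bound.continuousWithinAt
    fun z hz => norm_integral_cexp_neg_mul_sq_sub_le_of_re_pos hz hx

theorem tendsto_integral_cexp_neg_mul_sq_atTop {b : ℂ} (hb : 0 ≤ b.re) (hb0 : b ≠ 0) :
    Tendsto (fun x : ℝ => ∫ t in (0 : ℝ)..x, Complex.exp (-b * (t : ℂ) ^ 2)) atTop
      (nhds ((π / b) ^ (1 / 2 : ℂ) / 2)) := by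
  have h_error : Tendsto (fun x : ℝ => 1 / (‖b‖ * x)) atTop (nhds 0) :=
    tendsto_const_nhds.div_atTop (tendsto_id.const_mul_atTop (norm_pos_iff.mpr hb0))
  rw [tendsto_iff_norm_sub_tendsto_zero]
  refine squeeze_zero' (.of_forall fun _ => norm_nonneg _) ?_ h_error
  filter_upwards [eventually_gt_atTop 0] with x hx
  exact norm_integral_cexp_neg_mul_sq_sub_le hb hb0 hx

theorem pi_div_neg_I_mul_pi_div_two_cpow_half :
    ((π : ℂ) / -(Complex.I * π / 2)) ^ (1 / 2 : ℂ) = 1 + Complex.I := by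
  have hπ : (π : ℂ) ≠ 0 := ofReal_ne_zero.mpr pi_ne_zero
  have h_sq : (π : ℂ) / -(Complex.I * π / 2) = (1 + Complex.I) ^ 2 := by
    rw [div_eq_iff (by simp [hπ])]
    linear_combination ((π : ℂ) + π * Complex.I / 2) * Complex.I_sq
  rw [h_sq, one_div, sq_cpow_two_inv (by simp)]

theorem fresnel_tendsto_atTop :
    Tendsto (fun x : ℝ => ∫ t in (0:ℝ)..x, Complex.exp (Complex.I * π * (t : ℂ) ^ 2 / 2))
      atTop (nhds ((1 + Complex.I) / 2)) := by
  have h_re : 0 ≤ (-(Complex.I * π / 2)).re := by simp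
  have h_ne : -(Complex.I * π / 2) ≠ 0 := by simp [pi_ne_zero]
  have h_lim := tendsto_integral_cexp_neg_mul_sq_atTop h_re h_ne
  rw [pi_div_neg_I_mul_pi_div_two_cpow_half] at h_lim
  simpa only [neg_neg, div_mul_eq_mul_div] using h_lim
end

section
/- Let k ≥ 1 be a natural number and x > 0 a real number. Then the functions t ↦ t^{-2k} exp(iπt²/2) and t ↦ t^{-2k-2} exp(iπt²/2) are integrable on (x, ∞) and ∫_x^∞ t^{-2k} exp(iπt²/2) dt = (i/π)·x^{-(2k+1)}·exp(iπx²/2) - (i(2k+1)/π)·∫_x^∞ t^{-(2k+2)} exp(iπt²/2) dt. -/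
open Real Complex MeasureTheory

/-! The derivative of `t⁻⁽ⁿ⁺¹⁾ exp (b t²)` is `2 b t⁻ⁿ exp (b t²) - (n + 1) t⁻⁽ⁿ⁺²⁾ exp (b t²)`.
When `Re b ≤ 0` the exponential is bounded by `1`, so for `n ≥ 2` both terms are integrable on
`(x, ∞)` and the primitive vanishes at infinity. Integrating relates the two integrals,
and the Fresnel case is `b = iπ/2`. -/

section

variable {b : ℂ} {n : ℕ} {x : ℝ}

lemma norm_cexp_mul_sq_le_one (hb : b.re ≤ 0) (t : ℝ) : ‖cexp (b * (t : ℂ) ^ 2)‖ ≤ 1 := by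
  rw [← neg_neg b, norm_cexp_neg_mul_sq, Real.exp_le_one_iff, neg_re, neg_neg]
  exact mul_nonpos_of_nonpos_of_nonneg hb (sq_nonneg t)

lemma integrableOn_Ioi_inv_ofReal_pow (hn : 2 ≤ n) (hx : 0 < x) :
    IntegrableOn (fun t : ℝ => ((t : ℂ) ^ n)⁻¹) (Set.Ioi x) := by
  have hre : (-(n : ℂ)).re < -1 := by
    rw [neg_re, natCast_re]
    exact neg_lt_neg (by exact_mod_cast hn)
  simpa only [cpow_neg, cpow_natCast] using integrableOn_Ioi_cpow_of_lt hre hx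

lemma integrableOn_Ioi_inv_pow_mul_cexp_mul_sq (hb : b.re ≤ 0) (hn : 2 ≤ n) (hx : 0 < x) :
    IntegrableOn (fun t : ℝ => ((t : ℂ) ^ n)⁻¹ * cexp (b * (t : ℂ) ^ 2)) (Set.Ioi x) :=
  (integrableOn_Ioi_inv_ofReal_pow hn hx).mul_bdd
    (by fun_prop) (.of_forall (norm_cexp_mul_sq_le_one hb))

lemma tendsto_inv_pow_mul_cexp_mul_sq_atTop (hb : b.re ≤ 0) (hn : n ≠ 0) :
    Filter.Tendsto (fun t : ℝ => ((t : ℂ) ^ n)⁻¹ * cexp (b * (t : ℂ) ^ 2))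
      Filter.atTop (nhds 0) := by
  have hpow : Filter.Tendsto (fun t : ℝ => ((t : ℂ) ^ n)⁻¹) Filter.atTop (nhds 0) :=
    Filter.tendsto_inv₀_cobounded.comp <|
      (tendsto_pow_cobounded_cobounded hn).comp <|
        RCLike.tendsto_ofReal_atTop_cobounded ℂ
  exact hpow.zero_mul_isBoundedUnder_le
    (Filter.isBoundedUnder_of ⟨1, norm_cexp_mul_sq_le_one hb⟩)

lemma hasDerivAt_inv_pow_mul_cexp_mul_sq (b : ℂ) (n : ℕ) {z : ℂ} (hz : z ≠ 0) :
    HasDerivAt (fun w : ℂ => (w ^ (n + 1))⁻¹ * cexp (b * w ^ 2))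
      (2 * b * ((z ^ n)⁻¹ * cexp (b * z ^ 2)) -
        (n + 1 : ℕ) * ((z ^ (n + 2))⁻¹ * cexp (b * z ^ 2))) z := by
  have hpow := (hasDerivAt_pow (n + 1) z).fun_inv (pow_ne_zero _ hz)
  have hexp := ((hasDerivAt_pow 2 z).const_mul b).cexp
  convert! hpow.mul hexp using 1
  simp only [Nat.add_sub_cancel]
  field_simp
  ring

lemma integral_Ioi_inv_pow_mul_cexp_mul_sq (hb : b.re ≤ 0) (hn : 2 ≤ n) (hx : 0 < x) :
    2 * b * ∫ t in Set.Ioi x, ((t : ℂ) ^ n)⁻¹ * cexp (b * (t : ℂ) ^ 2) =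
      (n + 1 : ℕ) * (∫ t in Set.Ioi x, ((t : ℂ) ^ (n + 2))⁻¹ * cexp (b * (t : ℂ) ^ 2)) -
        ((x : ℂ) ^ (n + 1))⁻¹ * cexp (b * (x : ℂ) ^ 2) := by
  have hleft := (integrableOn_Ioi_inv_pow_mul_cexp_mul_sq hb hn hx).const_mul (2 * b)
  have hright := (integrableOn_Ioi_inv_pow_mul_cexp_mul_sq hb (Nat.le_add_left 2 n) hx).const_mul
    ((n + 1 : ℕ) : ℂ)
  have hderiv (t : ℝ) (ht : t ∈ Set.Ici x) :=
    (hasDerivAt_inv_pow_mul_cexp_mul_sq b n (ofReal_ne_zero.2 (hx.trans_le ht).ne')).comp_ofReal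
  have hFTC := integral_Ioi_of_hasDerivAt_of_tendsto' hderiv (hleft.sub hright)
    (tendsto_inv_pow_mul_cexp_mul_sq_atTop hb n.succ_ne_zero)
  rw [integral_sub hleft hright, integral_const_mul, integral_const_mul] at hFTC
  linear_combination hFTC

end

theorem fresnel_ibp_step (k : ℕ) (hk : 1 ≤ k) (x : ℝ) (hx : 0 < x) :
    IntegrableOn (fun t : ℝ =>
        ((t : ℂ) ^ (2 * k))⁻¹ * Complex.exp (Complex.I * π * (t : ℂ) ^ 2 / 2)) (Set.Ioi x) ∧
    IntegrableOn (fun t : ℝ =>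
        ((t : ℂ) ^ (2 * k + 2))⁻¹ * Complex.exp (Complex.I * π * (t : ℂ) ^ 2 / 2)) (Set.Ioi x) ∧
    (∫ t in Set.Ioi x, ((t : ℂ) ^ (2 * k))⁻¹ * Complex.exp (Complex.I * π * (t : ℂ) ^ 2 / 2)) =
      (Complex.I / π) * ((x : ℂ) ^ (2 * k + 1))⁻¹ * Complex.exp (Complex.I * π * (x : ℂ) ^ 2 / 2) -
        (Complex.I * (2 * k + 1 : ℕ) / π) *
          ∫ t in Set.Ioi x,
            ((t : ℂ) ^ (2 * k + 2))⁻¹ * Complex.exp (Complex.I * π * (t : ℂ) ^ 2 / 2) := by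
  have hphase (t : ℝ) : I * π * (t : ℂ) ^ 2 / 2 = I * π / 2 * (t : ℂ) ^ 2 := by ring
  have hre : (I * π / 2).re ≤ 0 := by simp
  have hn : 2 ≤ 2 * k := by lia
  simp only [hphase]
  refine ⟨integrableOn_Ioi_inv_pow_mul_cexp_mul_sq hre hn hx,
    integrableOn_Ioi_inv_pow_mul_cexp_mul_sq hre (Nat.le_add_left 2 _) hx, ?_⟩
  have hcoeff (c : ℂ) : c = -I / π * (2 * (I * π / 2) * c) := by
    have hpi : (π : ℂ) ≠ 0 := ofReal_ne_zero.2 Real.pi_ne_zero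
    field_simp
    rw [I_sq]
    ring
  refine (hcoeff _).trans ?_
  rw [integral_Ioi_inv_pow_mul_cexp_mul_sq hre hn hx]
  ring
end
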